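/- Let k be an algebraically closed field of characteristic 0, with the group G = (k,+) × (k,+) acting on k[x₀,x₁,x₂,x₃] by (s,t): x₀ ↦ x₀, x₁ ↦ x₁ + s·x₀, x₂ ↦ x₂ + s·x₁ + (s²/2 + t)·x₀, x₃ ↦ x₃ + s·x₂ + (s²/2 + t)·x₁ + (s³/6 + s·t)·x₀. Then the least positive degree of a G-invariant homogeneous polynomial h with h(0,1,0,0) ≠ 0 equals 3; in particular f = x₁³ − 3x₀x₁x₂ + 3x₀²x₃ is a G-invariant homogeneous polynomial of degree 3 with f(0,1,0,0) = 1, and no G-invariant homogeneous polynomial of degree 1 or 2 is nonzero at (0,1,0,0). -/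

import Mathlib

open MvPolynomial

/-- For `(s,t) ∈ k × k`, the `k`-algebra automorphism of `k[x₀,x₁,x₂,x₃]` given by
`x₀ ↦ x₀`, `x₁ ↦ x₁ + s·x₀`, `x₂ ↦ x₂ + s·x₁ + (s²/2 + t)·x₀`,
`x₃ ↦ x₃ + s·x₂ + (s²/2 + t)·x₁ + (s³/6 + s·t)·x₀`; these automorphisms define an action of
the group `(k,+) × (k,+)`. -/
noncomputable def g2Subst (k : Type*) [Field k] (s t : k) :
    MvPolynomial (Fin 4) k →ₐ[k] MvPolynomial (Fin 4) k :=
  MvPolynomial.aeval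
    ![MvPolynomial.X 0,
      MvPolynomial.X 1 + MvPolynomial.C s * MvPolynomial.X 0,
      MvPolynomial.X 2 + MvPolynomial.C s * MvPolynomial.X 1 +
        MvPolynomial.C (s ^ 2 / 2 + t) * MvPolynomial.X 0,
      MvPolynomial.X 3 + MvPolynomial.C s * MvPolynomial.X 2 +
        MvPolynomial.C (s ^ 2 / 2 + t) * MvPolynomial.X 1 +
        MvPolynomial.C (s ^ 3 / 6 + s * t) * MvPolynomial.X 0]

/-- The invariant `f = x₁³ − 3·x₀·x₁·x₂ + 3·x₀²·x₃`. -/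
noncomputable def g2Inv (k : Type*) [Field k] : MvPolynomial (Fin 4) k :=
  MvPolynomial.X 1 ^ 3 -
    MvPolynomial.C 3 * MvPolynomial.X 0 * MvPolynomial.X 1 * MvPolynomial.X 2 +
    MvPolynomial.C 3 * MvPolynomial.X 0 ^ 2 * MvPolynomial.X 3

/-! Where `x₀ ≠ 0`, the orbit of `x` meets the slice `x₁ = x₂ = 0` in the single point
`(x₀, 0, 0, f(x) / (3x₀²))`. Hence a homogeneous invariant `h` of degree `e` satisfies
`x₀ ^ (2e) * h(x) = h(x₀³, 0, 0, f(x) / 3)`. On the line `(a, 1, 0, 0)`, where `f = 1`, the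
right-hand side is a polynomial in `a³`, while the lowest term of the left-hand side is
`h(0, 1, 0, 0) * a ^ (2e)`. So `h(0, 1, 0, 0) ≠ 0` forces `3 ∣ 2e`. -/

theorem eval_smul_of_isHomogeneous {σ R : Type*} [CommSemiring R] {p : MvPolynomial σ R} {n : ℕ}
    (hp : p.IsHomogeneous n) (r : R) (x : σ → R) : eval (r • x) p = r ^ n * eval x p := by
  rw [eval_eq, eval_eq, Finset.mul_sum]
  refine Finset.sum_congr rfl fun d hd => ?_
  have hdeg : ∑ i ∈ d.support, d i = n := hp.degree_eq_sum_deg_support hd |>.symm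
  simp only [Pi.smul_apply, smul_eq_mul, mul_pow, Finset.prod_mul_distrib,
    Finset.prod_pow_eq_pow_sum, hdeg]
  ring

theorem polynomial_eval_aeval {σ R : Type*} [CommSemiring R] (g : σ → Polynomial R)
    (p : MvPolynomial σ R) (a : R) :
    (aeval g p).eval a = eval (fun i => (g i).eval a) p := by
  rw [← Polynomial.coe_aeval_eq_eval, comp_aeval_apply, aeval_eq_eval]

theorem polynomial_eq_of_eval_eq_of_ne_zero {R : Type*} [CommRing R] [IsDomain R] [Infinite R]
    {p q : Polynomial R} (h : ∀ a ≠ 0, p.eval a = q.eval a) : p = q :=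
  p.eq_of_infinite_eval_eq q ((Set.finite_singleton 0).infinite_compl.mono h)

theorem dvd_of_X_pow_mul_eq_expand {R : Type*} [CommSemiring R] {m n : ℕ} (hm : 0 < m)
    {p q : Polynomial R} (h : Polynomial.X ^ n * p = Polynomial.expand R m q)
    (hp : p.eval 0 ≠ 0) : m ∣ n := by
  by_contra hmn
  have hcoeff : p.coeff 0 = 0 := by
    simpa [Polynomial.coeff_X_pow_mul', Polynomial.coeff_expand hm, hmn]
      using congrArg (Polynomial.coeff · n) h
  exact hp (Polynomial.coeff_zero_eq_eval_zero p ▸ hcoeff)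

section G2Action

variable {k : Type*} [Field k]

theorem six_ne_zero_of_two_three (h2 : (2 : k) ≠ 0) (h3 : (3 : k) ≠ 0) : (6 : k) ≠ 0 := by
  convert mul_ne_zero h2 h3
  norm_num

theorem g2Subst_g2Inv (h2 : (2 : k) ≠ 0) (h3 : (3 : k) ≠ 0) (s t : k) :
    g2Subst k s t (g2Inv k) = g2Inv k := by
  have h6 := six_ne_zero_of_two_three h2 h3
  have hC : (C 3 * C (s ^ 3 / 6 + s * t) : MvPolynomial (Fin 4) k) =
      C 3 * C s * C (s ^ 2 / 2 + t) - C s ^ 3 := by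
    simp only [← C_mul, ← C_pow, ← C_sub]
    congr 1
    field_simp
    ring
  have hC3 : (C 3 : MvPolynomial (Fin 4) k) = 3 := map_ofNat C 3
  simp only [hC3, map_add, map_mul] at hC
  simp only [g2Subst, g2Inv, hC3, map_add, map_sub, map_mul, map_pow, map_ofNat, aeval_X,
    Matrix.cons_val]
  linear_combination X 0 ^ 3 * hC

theorem isHomogeneous_g2Inv : (g2Inv k).IsHomogeneous 3 := by
  have hX (i : Fin 4) := isHomogeneous_X k i
  have hC := isHomogeneous_C (Fin 4) (3 : k)
  exact (((hX 1).pow 3).sub (((hC.mul (hX 0)).mul (hX 1)).mul (hX 2))).add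
    ((hC.mul ((hX 0).pow 2)).mul (hX 3))

theorem eval_g2Inv (x : Fin 4 → k) :
    eval x (g2Inv k) = x 1 ^ 3 - 3 * x 0 * x 1 * x 2 + 3 * x 0 ^ 2 * x 3 := by
  simp [g2Inv]

/-- The transformation of `k⁴` dual to `g2Subst k s t`, defined so that pulling back a polynomial
function along it is substitution by `g2Subst k s t`. -/
def g2Act (s t : k) (x : Fin 4 → k) : Fin 4 → k :=
  ![x 0, x 1 + s * x 0, x 2 + s * x 1 + (s ^ 2 / 2 + t) * x 0,
    x 3 + s * x 2 + (s ^ 2 / 2 + t) * x 1 + (s ^ 3 / 6 + s * t) * x 0]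

theorem eval_g2Subst (s t : k) (x : Fin 4 → k) (p : MvPolynomial (Fin 4) k) :
    eval x (g2Subst k s t p) = eval (g2Act s t x) p := by
  rw [g2Subst, ← aeval_eq_eval, ← aeval_eq_eval, comp_aeval_apply]
  congr 2
  funext i
  fin_cases i <;> simp [g2Act]

theorem g2Act_eq_slice (h2 : (2 : k) ≠ 0) (h3 : (3 : k) ≠ 0) {x : Fin 4 → k} (hx : x 0 ≠ 0) :
    g2Act (-x 1 / x 0) (x 1 ^ 2 / (2 * x 0 ^ 2) - x 2 / x 0) x =
      ![x 0, 0, 0, eval x (g2Inv k) / (3 * x 0 ^ 2)] := by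
  have h6 := six_ne_zero_of_two_three h2 h3
  rw [eval_g2Inv, g2Act]
  congrm ![x 0, ?_, ?_, ?_] <;> field_simp <;> ring

variable {h : MvPolynomial (Fin 4) k} {e : ℕ}

theorem pow_mul_eval_eq_eval_slice (h2 : (2 : k) ≠ 0) (h3 : (3 : k) ≠ 0)
    (hinv : ∀ s t : k, g2Subst k s t h = h) (hh : h.IsHomogeneous e)
    {x : Fin 4 → k} (hx : x 0 ≠ 0) :
    x 0 ^ (2 * e) * eval x h = eval ![x 0 ^ 3, 0, 0, eval x (g2Inv k) / 3] h := by
  have hscale : x 0 ^ 2 • ![x 0, 0, 0, eval x (g2Inv k) / (3 * x 0 ^ 2)] =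
      ![x 0 ^ 3, 0, 0, eval x (g2Inv k) / 3] := by
    simp only [Matrix.smul_cons, smul_eq_mul, mul_zero, Matrix.smul_empty]
    congrm ![?_, 0, 0, ?_] <;> field_simp
  calc
    x 0 ^ (2 * e) * eval x h
      = (x 0 ^ 2) ^ e * eval ![x 0, 0, 0, eval x (g2Inv k) / (3 * x 0 ^ 2)] h := by
        rw [← g2Act_eq_slice h2 h3 hx, ← eval_g2Subst, hinv, pow_mul]
    _ = eval ![x 0 ^ 3, 0, 0, eval x (g2Inv k) / 3] h := by
        rw [← eval_smul_of_isHomogeneous hh, hscale]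

theorem three_dvd_of_eval_ne_zero [Infinite k] (h2 : (2 : k) ≠ 0) (h3 : (3 : k) ≠ 0)
    (hinv : ∀ s t : k, g2Subst k s t h = h) (hh : h.IsHomogeneous e)
    (hne : eval ![0, 1, 0, 0] h ≠ 0) : 3 ∣ e := by
  let P : Polynomial k := aeval ![Polynomial.X, 1, 0, 0] h
  let Q : Polynomial k := aeval ![Polynomial.X, 0, 0, Polynomial.C (1 / 3)] h
  have eval_P (a : k) : P.eval a = eval ![a, 1, 0, 0] h := by
    rw [polynomial_eval_aeval]
    congr 2
    funext i
    fin_cases i <;> simp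
  have eval_Q (a : k) : Q.eval a = eval ![a, 0, 0, 1 / 3] h := by
    rw [polynomial_eval_aeval]
    congr 2
    funext i
    fin_cases i <;> simp
  have hPQ : Polynomial.X ^ (2 * e) * P = Polynomial.expand k 3 Q := by
    refine polynomial_eq_of_eval_eq_of_ne_zero fun a ha => ?_
    have hf : eval ![a, 1, 0, 0] (g2Inv k) = 1 := by simp [eval_g2Inv]
    have hslice := pow_mul_eval_eq_eval_slice h2 h3 hinv hh (x := ![a, 1, 0, 0]) ha
    rw [hf] at hslice
    simpa [eval_P, eval_Q, Polynomial.expand_eval] using hslice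
  have hdvd : 3 ∣ 2 * e := dvd_of_X_pow_mul_eq_expand three_pos hPQ (by rwa [eval_P])
  exact Nat.Coprime.dvd_of_dvd_mul_left (by decide) hdvd

end G2Action

theorem isLeast_degree_g2_invariant_eq_three_general {k : Type*} [Field k] [Infinite k]
    (h2 : (2 : k) ≠ 0) (h3 : (3 : k) ≠ 0) :
    IsLeast {e : ℕ | 0 < e ∧ ∃ h : MvPolynomial (Fin 4) k,
        (∀ s t : k, g2Subst k s t h = h) ∧ h.IsHomogeneous e ∧
        MvPolynomial.eval (![0, 1, 0, 0] : Fin 4 → k) h ≠ 0}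
      3 ∧
    (∀ s t : k, g2Subst k s t (g2Inv k) = g2Inv k) ∧
    (g2Inv k).IsHomogeneous 3 ∧
    MvPolynomial.eval (![0, 1, 0, 0] : Fin 4 → k) (g2Inv k) = 1 := by
  have hf_inv := g2Subst_g2Inv h2 h3
  have hf_eval : eval ![0, 1, 0, 0] (g2Inv k) = 1 := by simp [eval_g2Inv]
  refine ⟨⟨?mem, ?lower⟩, hf_inv, isHomogeneous_g2Inv, hf_eval⟩
  case mem =>
    exact ⟨three_pos, g2Inv k, hf_inv, isHomogeneous_g2Inv, by simp [hf_eval]⟩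
  case lower =>
    rintro e ⟨he, h, hinv, hh, hne⟩
    exact Nat.le_of_dvd he (three_dvd_of_eval_ne_zero h2 h3 hinv hh hne)

/-- Let `k` be an algebraically closed field of characteristic `0`, with
`G = (k,+) × (k,+)` acting on `k[x₀,x₁,x₂,x₃]` by the automorphisms `g2Subst k s t`. Then the
least positive degree of a `G`-invariant homogeneous polynomial `h` with `h(0,1,0,0) ≠ 0`
equals `3`; in particular `f = x₁³ − 3x₀x₁x₂ + 3x₀²x₃` is a `G`-invariant homogeneous
polynomial of degree `3` with `f(0,1,0,0) = 1` (and no `G`-invariant homogeneous polynomial of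
degree `1` or `2` is nonzero at `(0,1,0,0)`). -/
theorem isLeast_degree_g2_invariant_eq_three
    (k : Type*) [Field k] [IsAlgClosed k] [CharZero k] :
    IsLeast {e : ℕ | 0 < e ∧ ∃ h : MvPolynomial (Fin 4) k,
        (∀ s t : k, g2Subst k s t h = h) ∧ h.IsHomogeneous e ∧
        MvPolynomial.eval (![0, 1, 0, 0] : Fin 4 → k) h ≠ 0}
      3 ∧
    (∀ s t : k, g2Subst k s t (g2Inv k) = g2Inv k) ∧
    (g2Inv k).IsHomogeneous 3 ∧
    MvPolynomial.eval (![0, 1, 0, 0] : Fin 4 → k) (g2Inv k) = 1 :=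
  isLeast_degree_g2_invariant_eq_three_general two_ne_zero three_ne_zero
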